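/- arXiv:1910.04666 — 2 statements merged into one kernel-verified Lean document; each statement's English description precedes it below -/
import Mathlib

section
/- If F₁,…,F_t are finite sets of size at most m such that no m+1 of them are disjointly representable, and additionally F_i ∩ F_j ≠ ∅ for all i, j, then t ≤ C(2m-1, m). -/
def DisjRep {α : Type*} {k : ℕ} (A : Fin k → Finset α) : Prop :=
  ∃ x : Fin k → α, ∀ i j, x i ∈ A j ↔ i = j

/-- Functions whose matrix of values at some points is triangular with nonzero diagonal are
linearly independent. -/
theorem linearIndependent_of_triangular_eval {K X ι : Type*} [Field K] [Fintype ι]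
    [LinearOrder ι] (f : ι → X → K) (x : ι → X) (hdiag : ∀ i, f i (x i) ≠ 0)
    (hlt : ∀ i j, i < j → f i (x j) = 0) : LinearIndependent K f := by
  have hdet : (Matrix.of fun i j => f i (x j)).det ≠ 0 := by
    rw [Matrix.det_of_isLowerTriangular]
    · exact Finset.prod_ne_zero_iff.mpr fun i _ => hdiag i
    · intro i j hij
      exact hlt i j hij
  exact LinearIndependent.of_comp (LinearMap.funLeft K K x)
    (Matrix.linearIndependent_rows_of_det_ne_zero hdet)

/-- A product of linear forms is a combination of monomials of the same degree. -/
theorem prod_linear_forms_mem_span {K σ : Type*} [Field K] [Fintype σ] [DecidableEq σ]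
    (S : Multiset (σ → K)) (n : ℕ) (hS : S.card = n) :
    (fun y : σ → K => (S.map fun v => ∑ l, v l * y l).prod) ∈
      Submodule.span K (Set.range fun (m : Sym σ n) (y : σ → K) =>
        ((m : Multiset σ).map y).prod) := by
  induction S using Multiset.induction_on generalizing n with
  | empty =>
    obtain rfl : n = 0 := by simpa using hS.symm
    exact Submodule.subset_span ⟨Sym.nil, by ext; simp⟩
  | cons v S ih =>
    obtain ⟨k, rfl⟩ : ∃ k, n = k + 1 := ⟨S.card, by simpa using hS.symm⟩
    have h := ih k (by simpa using hS)
    have hmul : ∀ g ∈ Submodule.span K (Set.range fun (m : Sym σ k) (y : σ → K) =>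
        ((m : Multiset σ).map y).prod), (fun y : σ → K => (∑ l, v l * y l) * g y) ∈
        Submodule.span K (Set.range fun (m : Sym σ (k + 1)) (y : σ → K) =>
          ((m : Multiset σ).map y).prod) := by
      intro g hg
      induction hg using Submodule.span_induction with
      | mem g hg =>
        obtain ⟨m, rfl⟩ := hg
        have : (fun y : σ → K => (∑ l, v l * y l) * ((m : Multiset σ).map y).prod) =
            ∑ l, v l • fun y : σ → K => (((l ::ₛ m : Sym σ (k + 1)) : Multiset σ).map y).prod := by
          ext y
          simp only [Finset.sum_apply, Pi.smul_apply, smul_eq_mul, Sym.coe_cons, Multiset.map_cons,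
            Multiset.prod_cons, Finset.sum_mul, mul_assoc]
        simp only [this]
        exact Submodule.sum_mem _ fun l _ =>
          Submodule.smul_mem _ _ (Submodule.subset_span ⟨l ::ₛ m, rfl⟩)
      | zero =>
        convert Submodule.zero_mem _ using 1
        ext y
        simp
      | add g h _ _ hg hh =>
        convert Submodule.add_mem _ hg hh using 1
        ext y
        simp [mul_add]
      | smul c g _ hg =>
        convert Submodule.smul_mem _ c hg using 1
        ext y
        simp [mul_left_comm]
    simpa using hmul _ h

/-- Every type embeds into the nonzero elements of a field. -/
theorem exists_field_injective_ne_zero.{u} (α : Type u) :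
    ∃ (K : Type u) (_ : Field K) (s : α → K), Function.Injective s ∧ ∀ e, s e ≠ 0 := by
  have h := IsFractionRing.injective (MvPolynomial α ℚ) (FractionRing (MvPolynomial α ℚ))
  refine ⟨FractionRing (MvPolynomial α ℚ), inferInstance, fun e => algebraMap _ _
    (MvPolynomial.X e), h.comp MvPolynomial.X_injective, fun e he => ?_⟩
  exact MvPolynomial.X_ne_zero (R := ℚ) e (h (he.trans (map_zero _).symm))

/-- The skew Bollobás set-pair inequality. -/
theorem skew_bollobas {α ι : Type*} [DecidableEq α] [Fintype ι] [LinearOrder ι] (a b : ℕ)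
    (A B : ι → Finset α) (hA : ∀ i, (A i).card ≤ a) (hB : ∀ i, (B i).card ≤ b)
    (hdisj : ∀ i, Disjoint (A i) (B i)) (hskew : ∀ i j, i < j → ¬ Disjoint (A j) (B i)) :
    Fintype.card ι ≤ (a + b).choose b := by
  obtain ⟨K, _, s, hs, hs0⟩ := exists_field_injective_ne_zero α
  let p : ι → Polynomial K := fun i => ∏ e ∈ A i, (Polynomial.X - Polynomial.C (s e))
  have hdeg : ∀ i, (p i).natDegree < a + 1 := fun i => by
    simp only [p, Polynomial.natDegree_finsetProd_X_sub_C_eq_card]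
    exact Nat.lt_succ_of_le (hA i)
  have hp : ∀ i c, (p i).eval c = 0 ↔ ∃ e ∈ A i, c = s e := fun i c => by
    simp [p, Polynomial.eval_prod, Finset.prod_eq_zero_iff, sub_eq_zero]
  let S : ι → Multiset K := fun i => (B i).val.map s + Multiset.replicate (b - (B i).card) 0
  have hScard : ∀ i, (S i).card = b := fun i => by
    simp [S, Nat.add_sub_cancel' (hB i)]
  let w : K → Fin (a + 1) → K := fun c l => c ^ (l : ℕ)
  let x : ι → Fin (a + 1) → K := fun i l => (p i).coeff l
  have hwx : ∀ c i, ∑ l, w c l * x i l = (p i).eval c := fun c i => by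
    rw [Polynomial.eval_eq_sum_range' (hdeg i), ← Fin.sum_univ_eq_sum_range
      (fun l => (p i).coeff l * c ^ l)]
    exact Finset.sum_congr rfl fun l _ => mul_comm _ _
  let f : ι → (Fin (a + 1) → K) → K := fun i y =>
    (((S i).map w).map fun v => ∑ l, v l * y l).prod
  have hf : ∀ i j, f i (x j) = 0 ↔ ¬ Disjoint (A j) (B i) := by
    intro i j
    have hzero : ∀ c, c ∈ Multiset.replicate (b - (B i).card) (0 : K) → (p j).eval c ≠ 0 := by
      intro c hc h
      obtain rfl := Multiset.eq_of_mem_replicate hc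
      obtain ⟨e, -, he⟩ := (hp j _).mp h
      exact hs0 e he.symm
    simp only [f, Multiset.map_map, Function.comp_def, hwx, Multiset.prod_eq_zero_iff,
      Multiset.mem_map, Finset.not_disjoint_iff]
    constructor
    · rintro ⟨c, hc, h⟩
      rcases Multiset.mem_add.mp hc with hc | hc
      · obtain ⟨e, he, rfl⟩ := Multiset.mem_map.mp hc
        obtain ⟨e', he', h⟩ := (hp j _).mp h
        exact ⟨e, hs h ▸ he', he⟩
      · exact absurd h (hzero c hc)
    · rintro ⟨e, he, he'⟩
      exact ⟨s e, Multiset.mem_add.mpr (Or.inl (Multiset.mem_map_of_mem s he')),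
        (hp j _).mpr ⟨e, he, rfl⟩⟩
  have hli : LinearIndependent K f := linearIndependent_of_triangular_eval f x
    (fun i h => (hf i i).mp h (hdisj i)) fun i j hij => (hf i j).mpr (hskew i j hij)
  let mon : Sym (Fin (a + 1)) b → (Fin (a + 1) → K) → K := fun m y =>
    ((m : Multiset (Fin (a + 1))).map y).prod
  have hmem : ∀ i, f i ∈ Submodule.span K (Set.range mon) := fun i =>
    prod_linear_forms_mem_span ((S i).map w) b (by simp [hScard])
  have hli' : LinearIndependent K
      (fun i => (⟨f i, hmem i⟩ : Submodule.span K (Set.range mon))) :=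
    LinearIndependent.of_comp (Submodule.subtype _) hli
  have : FiniteDimensional K (Submodule.span K (Set.range mon)) :=
    FiniteDimensional.span_of_finite K (Set.finite_range mon)
  calc Fintype.card ι ≤ Module.finrank K (Submodule.span K (Set.range mon)) :=
        hli'.fintype_card_le_finrank
    _ ≤ Fintype.card (Sym (Fin (a + 1)) b) := finrank_range_le_card mon
    _ = (a + b).choose b := by
        rw [Sym.card_sym_eq_choose, Fintype.card_fin]
        congr 1
        omega

/-- If no `m + 1` members are disjointly representable, then the members not contained in a
finset `C` have a transversal of size at most `m` disjoint from `C`. -/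
theorem exists_small_transversal {α ι : Type*} [DecidableEq α] [Fintype ι] (m : ℕ)
    (F : ι → Finset α)
    (hnoDR : ¬ ∃ g : Fin (m + 1) → ι, Function.Injective g ∧ DisjRep (F ∘ g)) (C : Finset α) :
    ∃ E : Finset α, E.card ≤ m ∧ Disjoint C E ∧ ∀ j, ¬ F j ⊆ C → ¬ Disjoint (F j) E := by
  classical
  let P : Finset α → Prop := fun E => Disjoint C E ∧ ∀ j, ¬ F j ⊆ C → ¬ Disjoint (F j) E
  have hP : ∃ E, P E := by
    refine ⟨Finset.univ.biUnion F \ C, Finset.disjoint_sdiff, fun j hj => ?_⟩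
    obtain ⟨e, he, heC⟩ := Finset.not_subset.mp hj
    exact Finset.not_disjoint_iff.mpr ⟨e, he, by
      simpa [heC] using ⟨j, he⟩⟩
  obtain ⟨E, hE, hmin⟩ := WellFounded.has_min (measure (Finset.card (α := α))).wf {E | P E} hP
  refine ⟨E, ?_, hE⟩
  by_contra! hcard
  have hpriv : ∀ e ∈ E, ∃ j, ∀ e' ∈ E, e' ∈ F j ↔ e' = e := by
    intro e he
    have hnot : ¬ P (E.erase e) := fun h => hmin _ h (Finset.card_erase_lt_of_mem he)
    have hd : Disjoint C (E.erase e) := hE.1.mono_right (Finset.erase_subset _ _)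
    simp only [P, hd, true_and, not_forall, not_not] at hnot
    obtain ⟨j, hj, hjE⟩ := hnot
    have hother : ∀ e' ∈ E, e' ∈ F j → e' = e := fun e' he' hF => by
      by_contra hne
      exact Finset.disjoint_left.mp hjE hF (Finset.mem_erase.mpr ⟨hne, he'⟩)
    obtain ⟨e₀, h₀, h₁⟩ := Finset.not_disjoint_iff.mp (hE.2 j hj)
    refine ⟨j, fun e' he' => ⟨hother e' he', ?_⟩⟩
    rintro rfl
    exact hother e₀ h₁ h₀ ▸ h₀
  choose g hg using hpriv
  obtain ⟨x⟩ : Nonempty (Fin (m + 1) ↪ E) :=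
    Function.Embedding.nonempty_of_card_le (by simpa using hcard)
  have hrep : ∀ i j, (x i : α) ∈ F (g (x j) (x j).2) ↔ i = j := fun i j => by
    rw [hg _ _ _ (x i).2, Subtype.coe_inj, x.injective.eq_iff]
  refine hnoDR ⟨fun k => g (x k) (x k).2, fun i j hij => ?_, fun k => x k, hrep⟩
  have h := (hrep i i).mpr rfl
  simp only at hij
  rw [hij] at h
  exact (hrep i j).mp h

theorem stmt_8 {α : Type*} [DecidableEq α] (t m : ℕ)
    (F : Fin t → Finset α) (hinj : Function.Injective F)
    (hcard : ∀ i, (F i).card ≤ m)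
    (hint : ∀ i j, (F i ∩ F j).Nonempty)
    (hnoDR : ¬ ∃ g : Fin (m + 1) → Fin t,
      Function.Injective g ∧ DisjRep (F ∘ g)) :
    t ≤ Nat.choose (2 * m - 1) m := by
  rcases Nat.eq_zero_or_pos t with rfl | ht
  · exact Nat.zero_le _
  have hm : 0 < m := by
    obtain ⟨e, he⟩ := hint ⟨0, ht⟩ ⟨0, ht⟩
    exact (Finset.card_pos.mpr ⟨e, (Finset.mem_inter.mp he).1⟩).trans_le (hcard _)
  choose E hEcard hEdisj hEmeet using fun i => exists_small_transversal m F hnoDR (F i)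
  let σ := Tuple.sort fun i => (F i).card
  have hmeet : ∀ i j, i < j → ¬ Disjoint (F (σ j)) (E (σ i)) := fun i j hij =>
    hEmeet _ _ fun hsub => hij.ne' <| σ.injective <| hinj <|
      Finset.eq_of_subset_of_card_le hsub (Tuple.monotone_sort (fun i => (F i).card) hij.le)
  have hFF : ∀ i j, ¬ Disjoint (F i) (F j) := fun i j =>
    Finset.not_disjoint_iff_nonempty_inter.mpr (hint i j)
  let A : (Fin t)ᵒᵈ ⊕ₗ Fin t → Finset α := fun i =>
    Sum.elim (fun i => E (σ (OrderDual.ofDual i))) (fun i => F (σ i)) (ofLex i)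
  let B : (Fin t)ᵒᵈ ⊕ₗ Fin t → Finset α := fun i =>
    Sum.elim (fun i => F (σ (OrderDual.ofDual i))) (fun i => E (σ i)) (ofLex i)
  have key := skew_bollobas m m A B
    (by rintro (i | i); exacts [hEcard _, hcard _])
    (by rintro (i | i); exacts [hcard _, hEcard _])
    (by rintro (i | i); exacts [(hEdisj _).symm, hEdisj _])
    (by
      rintro (i | i) (j | j) hij
      · have hlt : i < j := Sum.Lex.inl_lt_inl_iff.mp hij
        exact fun h => hmeet _ _ (OrderDual.ofDual_lt_ofDual.mpr hlt) h.symm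
      · exact hFF _ _
      · exact absurd hij Sum.Lex.not_inr_lt_inl
      · exact hmeet _ _ (Sum.Lex.inr_lt_inr_iff.mp hij))
  have hcount : Fintype.card ((Fin t)ᵒᵈ ⊕ₗ Fin t) = t + t := by
    rw [Fintype.card_lex, Fintype.card_sum, Fintype.card_orderDual, Fintype.card_fin]
  obtain ⟨k, rfl⟩ : ∃ k, m = k + 1 := ⟨m - 1, by omega⟩
  have hchoose : (k + 1 + (k + 1)).choose (k + 1) = 2 * (2 * (k + 1) - 1).choose (k + 1) := by
    have h := Nat.choose_symm_half k
    rw [show k + 1 + (k + 1) = (2 * k + 1) + 1 by ring, Nat.choose_succ_succ, ← h,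
      show 2 * (k + 1) - 1 = 2 * k + 1 by omega]
    ring
  omega
end

section
/- If a family F of m-element sets has property P, then |F| ≤ C(2m-1, m). -/
/-- A finite set of size at most `b` can be listed by `Fin b`, padding with `0`. -/
lemma exists_padded_enumeration {α : Type*} {b : ℕ} (φ : α → ℚ) (B : Finset α)
    (hB : B.card ≤ b) :
    ∃ v : Fin b → ℚ, (∀ i, v i = 0 ∨ ∃ x ∈ B, v i = φ x) ∧ ∀ x ∈ B, ∃ i, v i = φ x := by
  refine ⟨fun i ↦ if h : (i : ℕ) < B.card then φ (B.equivFin.symm ⟨i, h⟩) else 0, ?_, ?_⟩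
  · intro i
    by_cases h : (i : ℕ) < B.card
    · exact Or.inr ⟨B.equivFin.symm ⟨i, h⟩, (B.equivFin.symm ⟨i, h⟩).2, by simp [h]⟩
    · exact Or.inl (by simp [h])
  · intro x hx
    have hlt := (B.equivFin ⟨x, hx⟩).2
    exact ⟨⟨B.equivFin ⟨x, hx⟩, hlt.trans_le hB⟩, by simp⟩

/-- The matrix `∏ k, pᵢ (vⱼ k)`, for polynomials `pᵢ` of degree at most `a` and `b`-tuples `vⱼ`,
has rank at most the number of monomials of degree `b` in `a + 1` variables. -/
lemma rank_prod_eval_le {ι : Type*} [Fintype ι] {a b : ℕ} (p : ι → Polynomial ℚ)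
    (hp : ∀ i, (p i).natDegree ≤ a) (v : ι → Fin b → ℚ) :
    (Matrix.of fun i j ↦ ∏ k, (p i).eval (v j k)).rank ≤ (a + b).choose b := by
  classical
  let q : (Fin b → Fin (a + 1)) → Sym (Fin (a + 1)) b :=
    fun g ↦ ⟨Finset.univ.val.map g, by simp⟩
  let P : Matrix ι (Sym (Fin (a + 1)) b) ℚ :=
    Matrix.of fun i s ↦ ((s : Multiset (Fin (a + 1))).map fun c : Fin (a + 1) ↦ (p i).coeff (c : ℕ)).prod
  let Q : Matrix (Sym (Fin (a + 1)) b) ι ℚ :=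
    Matrix.of fun s j ↦ ∑ g with q g = s, ∏ k, v j k ^ (g k : ℕ)
  have hM : (Matrix.of fun i j ↦ ∏ k, (p i).eval (v j k)) = P * Q := by
    ext i j
    have heval (x : ℚ) : (p i).eval x = ∑ c : Fin (a + 1), (p i).coeff c * x ^ (c : ℕ) := by
      rw [Polynomial.eval_eq_sum_range' (Nat.lt_succ_of_le (hp i)), Finset.sum_range]
    simp only [Matrix.of_apply, Matrix.mul_apply, heval, P, Q]
    rw [Finset.prod_univ_sum, Fintype.piFinset_univ, ← Finset.sum_fiberwise Finset.univ q]
    refine Finset.sum_congr rfl fun s _ ↦ ?_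
    rw [Finset.mul_sum]
    refine Finset.sum_congr rfl fun g hg ↦ ?_
    obtain rfl := (Finset.mem_filter.mp hg).2
    simp only [q, Finset.prod_mul_distrib, Sym.coe_mk, Multiset.map_map]
    rfl
  rw [hM]
  calc (P * Q).rank ≤ P.rank := Matrix.rank_mul_le_left P Q
    _ ≤ Fintype.card (Sym (Fin (a + 1)) b) := Matrix.rank_le_card_width P
    _ = (a + b).choose b := by
      rw [Sym.card_sym_eq_choose, Fintype.card_fin]
      congr 1
      omega

/-- The skew version of the Bollobás set-pairs inequality. -/
theorem card_le_choose_of_skew_set_pairs {α ι : Type*} [Fintype ι] [LinearOrder ι] {a b : ℕ}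
    (A B : ι → Finset α) (hA : ∀ i, (A i).card ≤ a) (hB : ∀ i, (B i).card ≤ b)
    (hdisj : ∀ i, Disjoint (A i) (B i)) (hmeet : ∀ i j, i < j → ¬ Disjoint (A i) (B j)) :
    Fintype.card ι ≤ (a + b).choose b := by
  classical
  obtain ⟨ψ, hψ⟩ :=
    Set.countable_iff_exists_injOn.mp (Finset.univ.biUnion fun i ↦ A i ∪ B i).countable_toSet
  have hmem {i : ι} {x : α} (hx : x ∈ A i ∪ B i) :
      x ∈ ((Finset.univ.biUnion fun i ↦ A i ∪ B i : Finset α) : Set α) :=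
    Finset.mem_coe.mpr (Finset.mem_biUnion.mpr ⟨i, Finset.mem_univ i, hx⟩)
  let φ : α → ℚ := fun x ↦ (ψ x : ℚ) + 1
  let p : ι → Polynomial ℚ := fun i ↦ ∏ z ∈ A i, (Polynomial.X - Polynomial.C (φ z))
  have hp (i : ι) : (p i).natDegree ≤ a := by
    simpa [p, Polynomial.natDegree_prod_of_monic _ _ fun z _ ↦ Polynomial.monic_X_sub_C (φ z)]
      using hA i
  have hroot (i : ι) (x : ℚ) : (p i).eval x = 0 ↔ ∃ z ∈ A i, x = φ z := by
    simp [p, Polynomial.eval_prod, Finset.prod_eq_zero_iff, sub_eq_zero]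
  choose v hv hv' using fun j ↦ exists_padded_enumeration φ (B j) (hB j)
  let M : Matrix ι ι ℚ := Matrix.of fun i j ↦ ∏ k, (p i).eval (v j k)
  have hlower : M.IsLowerTriangular := by
    intro i j hij
    obtain ⟨x, hxA, hxB⟩ := Finset.not_disjoint_iff.mp (hmeet i j hij)
    obtain ⟨k, hk⟩ := hv' j x hxB
    exact Finset.prod_eq_zero (Finset.mem_univ k) ((hroot i _).mpr ⟨x, hxA, hk⟩)
  have hdiag (i : ι) : M i i ≠ 0 := by
    intro h
    obtain ⟨k, -, h⟩ := Finset.prod_eq_zero_iff.mp (show ∏ k, (p i).eval (v i k) = 0 from h)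
    obtain ⟨z, hz, hkz⟩ := (hroot i _).mp h
    rcases hv i k with h0 | ⟨x, hx, hkx⟩
    · have : (0 : ℚ) < φ z := by positivity
      linarith
    · have hzx : ψ z = ψ x := by
        have : φ z = φ x := hkz.symm.trans hkx
        simpa [φ] using this
      have := hψ (hmem (Finset.mem_union_left _ hz)) (hmem (Finset.mem_union_right _ hx)) hzx
      exact Finset.disjoint_left.mp (hdisj i) hz (this ▸ hx)
  have hunit : IsUnit M := by
    rw [Matrix.isUnit_iff_isUnit_det, Matrix.det_of_isLowerTriangular M hlower]
    exact (Finset.prod_ne_zero_iff.mpr fun i _ ↦ hdiag i).isUnit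
  rw [← Matrix.rank_of_isUnit M hunit]
  exact rank_prod_eval_le p hp v

/-- If `F` has no `m + 1` disjointly representable members, each member `A` of the antichain `F`
is avoided by a set of size at most `m` which meets all other members. -/
lemma exists_small_transversal_s9 {α : Type*} [DecidableEq α] {m : ℕ} {F : Finset (Finset α)}
    (hanti : IsAntichain (· ⊆ ·) (F : Set (Finset α)))
    (hrep : ∀ (f : Fin (m + 1) → Finset α) (x : Fin (m + 1) → α), (∀ i, f i ∈ F) →
      ¬ ∀ i j, x i ∈ f j ↔ i = j)
    {A : Finset α} (hA : A ∈ F) :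
    ∃ T : Finset α, T.card ≤ m ∧ Disjoint A T ∧ ∀ A' ∈ F, A' ≠ A → ¬ Disjoint A' T := by
  let S := (F.biUnion id \ A).powerset.filter fun T ↦ ∀ A' ∈ F, A' ≠ A → ¬ Disjoint A' T
  have hS : F.biUnion id \ A ∈ S := by
    refine Finset.mem_filter.mpr ⟨Finset.mem_powerset_self _, fun A' hA' hne ↦ ?_⟩
    obtain ⟨x, hx, hxA⟩ := Finset.not_subset.mp (hanti hA' hA hne)
    exact Finset.not_disjoint_iff.mpr
      ⟨x, hx, Finset.mem_sdiff.mpr ⟨Finset.mem_biUnion.mpr ⟨A', hA', hx⟩, hxA⟩⟩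
  obtain ⟨T, hTS, hmin⟩ := S.exists_min_image Finset.card ⟨_, hS⟩
  obtain ⟨hTU, hT⟩ := Finset.mem_filter.mp hTS
  rw [Finset.mem_powerset] at hTU
  refine ⟨T, ?_, Finset.disjoint_of_subset_right hTU Finset.disjoint_sdiff, hT⟩
  have hpriv (t : T) : ∃ A' ∈ F, ∀ s ∈ T, s ∈ A' ↔ s = t := by
    by_contra! hcon
    have : T.erase t ∈ S := by
      refine Finset.mem_filter.mpr
        ⟨Finset.mem_powerset.mpr ((Finset.erase_subset _ _).trans hTU), fun A' hA' hne hd ↦ ?_⟩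
      have hs (s : α) (hs : s ∈ T) (hsA : s ∈ A') : s = t := by
        by_contra hst
        exact Finset.disjoint_left.mp hd hsA (Finset.mem_erase.mpr ⟨hst, hs⟩)
      obtain ⟨y, hyA, hyT⟩ := Finset.not_disjoint_iff.mp (hT A' hA' hne)
      obtain ⟨s, hsT, hs'⟩ := hcon A' hA'
      have hy := hs y hyT hyA
      have := hs s hsT
      grind
    exact (hmin _ this).not_gt (Finset.card_erase_lt_of_mem t.2)
  choose g hgF hg using hpriv
  by_contra! hcard
  let e : Fin (m + 1) → T := fun i ↦ T.equivFin.symm (Fin.castLE hcard i)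
  have he : Function.Injective e :=
    T.equivFin.symm.injective.comp (Fin.castLE_injective hcard)
  refine hrep (fun i ↦ g (e i)) (fun i ↦ e i) (fun i ↦ hgF _) fun i j ↦ ?_
  rw [hg (e j) _ (e i).2, Subtype.coe_inj, he.eq_iff]

/-- An intersecting antichain of sets of size at most `m` without `m + 1` disjointly representable
members has at most `(2 * m).choose m / 2` members. -/
theorem two_mul_card_le_of_intersecting {α : Type*} [DecidableEq α] {m : ℕ}
    {F : Finset (Finset α)} (hcard : ∀ A ∈ F, A.card ≤ m)
    (hanti : IsAntichain (· ⊆ ·) (F : Set (Finset α)))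
    (hinter : ∀ A ∈ F, ∀ B ∈ F, ¬ Disjoint A B)
    (hrep : ∀ (f : Fin (m + 1) → Finset α) (x : Fin (m + 1) → α), (∀ i, f i ∈ F) →
      ¬ ∀ i j, x i ∈ f j ↔ i = j) :
    2 * F.card ≤ (m + m).choose m := by
  let A : Fin F.card → Finset α := fun i ↦ F.equivFin.symm i
  have hAF (i) : A i ∈ F := (F.equivFin.symm i).2
  have hA : Function.Injective A := Subtype.val_injective.comp F.equivFin.symm.injective
  choose T hTcard hTdisj hT using fun i ↦ exists_small_transversal_s9 hanti hrep (hAF i)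
  have key := card_le_choose_of_skew_set_pairs (ι := Fin F.card ⊕ₗ Fin F.card) (a := m) (b := m)
    (fun i ↦ Sum.elim A T (ofLex i)) (fun i ↦ Sum.elim T A (ofLex i)) ?_ ?_ ?_ ?_
  · have hι : Fintype.card (Fin F.card ⊕ₗ Fin F.card) = 2 * F.card := by
      rw [Fintype.card_lex, Fintype.card_sum, Fintype.card_fin, two_mul]
    rwa [hι] at key
  · rintro (i | i)
    exacts [hcard _ (hAF i), hTcard i]
  · rintro (i | i)
    exacts [hTcard i, hcard _ (hAF i)]
  · rintro (i | i)
    exacts [hTdisj i, (hTdisj i).symm]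
  · rintro (i | i) (j | j) hij
    · have hij : i < j := Sum.Lex.inl_lt_inl_iff.mp hij
      exact hT j _ (hAF i) (hA.ne hij.ne)
    · exact hinter _ (hAF i) _ (hAF j)
    · exact absurd hij Sum.Lex.not_inr_lt_inl
    · have hij : i < j := Sum.Lex.inr_lt_inr_iff.mp hij
      exact fun h ↦ hT i _ (hAF j) (hA.ne hij.ne') h.symm

theorem stmt_9 {α : Type*} [DecidableEq α] (m : ℕ)
    (F : Finset (Finset α)) (hcard : ∀ A ∈ F, A.card = m)
    (hP : ∀ k : ℕ, 1 ≤ k → ∀ f : Fin k → Finset α, (∀ i, f i ∈ F) →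
      ∃ j : Fin k, ((f j) \ (Finset.univ.erase j).biUnion f).card ≤ m / k) :
    F.card ≤ Nat.choose (2 * m - 1) m := by
  rcases m with _ | n
  · have : F ⊆ {∅} := fun A hA ↦ Finset.mem_singleton.mpr (Finset.card_eq_zero.mp (hcard A hA))
    simpa using Finset.card_le_card this
  have hanti : IsAntichain (· ⊆ ·) (F : Set (Finset α)) := fun A hA B hB hne hsub ↦
    hne (Finset.eq_of_subset_of_card_le hsub (by rw [hcard A hA, hcard B hB]))
  have hinter : ∀ A ∈ F, ∀ B ∈ F, ¬ Disjoint A B := by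
    intro A hA B hB hd
    obtain ⟨j, hj⟩ := hP 2 (by norm_num) ![A, B] (by simp [Fin.forall_fin_two, hA, hB])
    have hj' : (![A, B] j \ (Finset.univ.erase j).biUnion ![A, B]) = ![A, B] j := by
      refine Finset.sdiff_eq_self_of_disjoint ((Finset.disjoint_biUnion_right _ _ _).mpr ?_)
      fin_cases j <;> simp [Fin.forall_fin_two, hd, hd.symm]
    have hc : (![A, B] j).card = n + 1 := by
      fin_cases j
      exacts [hcard A hA, hcard B hB]
    rw [hj', hc] at hj
    omega
  have hrep (f : Fin (n + 1 + 1) → Finset α) (x : Fin (n + 1 + 1) → α) (hf : ∀ i, f i ∈ F) :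
      ¬ ∀ i j, x i ∈ f j ↔ i = j := by
    intro hx
    obtain ⟨j, hj⟩ := hP (n + 1 + 1) (by omega) f hf
    rw [Nat.div_eq_of_lt (Nat.lt_succ_self _), Nat.le_zero, Finset.card_eq_zero,
      Finset.sdiff_eq_empty_iff_subset] at hj
    obtain ⟨i, hi, hij⟩ := Finset.mem_biUnion.mp (hj ((hx j j).mpr rfl))
    exact Finset.ne_of_mem_erase hi ((hx j i).mp hij).symm
  have key := two_mul_card_le_of_intersecting (fun A hA ↦ (hcard A hA).le) hanti hinter hrep
  have hsymm := Nat.choose_symm_half n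
  have hpascal : (n + 1 + (n + 1)).choose (n + 1) =
      (2 * n + 1).choose n + (2 * n + 1).choose (n + 1) := by
    rw [show n + 1 + (n + 1) = 2 * n + 1 + 1 by ring, Nat.choose_succ_succ]
  rw [show 2 * (n + 1) - 1 = 2 * n + 1 by omega]
  omega
end
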